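/- arXiv:2112.03996 — 2 statements merged into one kernel-verified Lean document; each statement's English description precedes it below -/
import Mathlib

section
/- Let 0 < p ≤ ∞, 0 < q ≤ ∞, τ ≥ 0 and δ > nτ. There is a constant C > 0 such that for every sequence (g_j)_{j≥0} ⊂ L^p_loc(ℝⁿ), ‖(Σ_{k≥0} 2^{−δ|j−k|} g_k)_{j≥0}‖_{ℓ^q L^p_τ} ≤ C ‖(g_j)_{j≥0}‖_{ℓ^q L^p_τ}. -/
open MeasureTheory
open scoped ENNReal NNReal

/-- The open dyadic cube `Q_{J,v} = 2^{−J}v + (0, 2^{−J})ⁿ`. -/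
def dyadicCube (n : ℕ) (J : ℤ) (v : Fin n → ℤ) : Set (EuclideanSpace ℝ (Fin n)) :=
  {x | ∀ i, (2 : ℝ) ^ (-J) * (v i : ℝ) < x i ∧ x i < (2 : ℝ) ^ (-J) * ((v i : ℝ) + 1)}

/-- The `L^p` (quasi-)norm (`0 < p ≤ ∞`) of a `[0,∞]`-valued function on a set `s ⊆ ℝⁿ`. -/
noncomputable def LpOn {n : ℕ} (p : ℝ≥0∞) (F : EuclideanSpace ℝ (Fin n) → ℝ≥0∞)
    (s : Set (EuclideanSpace ℝ (Fin n))) : ℝ≥0∞ :=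
  if p = ∞ then essSup F (volume.restrict s)
  else (∫⁻ x in s, F x ^ p.toReal) ^ (1 / p.toReal)

/-- The Morrey norm `‖F‖_{M^p_τ} = sup_{J,v} 2^{nJτ} ‖F‖_{L^p(Q_{J,v})}`. -/
noncomputable def morreyNormE (n : ℕ) (p : ℝ≥0∞) (τ : ℝ)
    (F : EuclideanSpace ℝ (Fin n) → ℝ≥0∞) : ℝ≥0∞ :=
  ⨆ (J : ℤ) (v : Fin n → ℤ),
    ENNReal.ofReal ((2 : ℝ) ^ ((n : ℝ) * (J : ℝ) * τ)) * LpOn p F (dyadicCube n J v)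

/-- The tail `ℓ^q` norm over indices `j ≥ max(0,J)` (supremum modification for `q = ∞`). -/
noncomputable def tailLqE (q : ℝ≥0∞) (J : ℤ) (a : ℕ → ℝ≥0∞) : ℝ≥0∞ :=
  if q = ∞ then ⨆ j : {j : ℕ // J ≤ (j : ℤ)}, a j
  else (∑' j : {j : ℕ // J ≤ (j : ℤ)}, a j ^ q.toReal) ^ (1 / q.toReal)

/-- The `ℓ^q L^p_τ` norm
`sup_{J,v} 2^{nJτ} ( Σ_{j ≥ max(0,J)} ‖f_j‖_{L^p(Q_{J,v})}^q )^{1/q}`. -/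
noncomputable def lqLpTauE (n : ℕ) (q p : ℝ≥0∞) (τ : ℝ)
    (F : ℕ → EuclideanSpace ℝ (Fin n) → ℝ≥0∞) : ℝ≥0∞ :=
  ⨆ (J : ℤ) (v : Fin n → ℤ),
    ENNReal.ofReal ((2 : ℝ) ^ ((n : ℝ) * (J : ℝ) * τ)) *
      tailLqE q J (fun j => LpOn p (F j) (dyadicCube n J v))

/-!
Write `S_m` for the shift `(S_m g)_j = g_{j-m}` of a sequence extended by zero to negative indices.
The convolution with a kernel `a` is `∑_m a_m S_m g`, a superposition over `m ∈ ℤ`. For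
`r ≤ min(1, p, q)` the `r`-th power of the `ℓ^q L^p_τ` norm is countably subadditive, so it suffices
to bound each `S_m`. Since `Q_{J,v}` lies in its ancestor `|m|` generations up, and the indices
`j ≥ J` are sent by `j ↦ j - m` into `j ≥ J - |m|`, the shift `S_m` has norm at most `2^{nτ|m|}`,
the loss in the weight `2^{nJτ}`. Finally `∑_m (2^{-δ|m|} 2^{nτ|m|})^r` converges because `δ > nτ`.
-/

section PowerTriangle

theorem rpow_tsum_le_tsum_rpow {ι : Type*} (f : ι → ℝ≥0∞) {r : ℝ} (hr : 0 < r) (hr1 : r ≤ 1) :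
    (∑' i, f i) ^ r ≤ ∑' i, f i ^ r := by
  rw [← ENNReal.le_rpow_inv_iff hr, ENNReal.tsum_eq_iSup_sum]
  refine iSup_le fun s => (ENNReal.le_rpow_inv_iff hr).2 ?_
  calc (∑ i ∈ s, f i) ^ r
      ≤ ∑ i ∈ s, f i ^ r :=
        Finset.le_sum_of_subadditive (fun x : ℝ≥0∞ => x ^ r) (ENNReal.zero_rpow_of_pos hr).le
          (fun a b => ENNReal.rpow_add_le_add_rpow a b hr.le hr1) s f
    _ ≤ ∑' i, f i ^ r := ENNReal.sum_le_tsum s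

variable {α ι : Type*} [MeasurableSpace α] [Countable ι] {μ : Measure α} {p : ℝ≥0∞}

theorem eLpNorm_iSup_of_directed (hp : p ≠ 0) {f : ι → α → ℝ≥0∞} (hf : ∀ i, AEMeasurable (f i) μ)
    (hdir : Directed (· ≤ ·) f) :
    eLpNorm (fun x => ⨆ i, f i x) p μ = ⨆ i, eLpNorm (f i) p μ := by
  rcases eq_or_ne p ∞ with rfl | hp_top
  · refine le_antisymm ?_ (iSup_le fun i => eLpNorm_mono_enorm fun x => le_iSup (f · x) i)
    simp only [eLpNorm_exponent_top]
    have hae : ∀ᵐ x ∂μ, ∀ i, f i x ≤ eLpNormEssSup (f i) μ :=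
      ae_all_iff.2 fun i => ENNReal.ae_le_essSup (f i)
    refine essSup_le_of_ae_le _ ?_
    filter_upwards [hae] with x hx using iSup_mono hx
  · have hpr : 0 < p.toReal := ENNReal.toReal_pos hp hp_top
    have hsup_rpow : ∀ u : ι → ℝ≥0∞, (⨆ i, u i) ^ p.toReal = ⨆ i, u i ^ p.toReal := fun u =>
      (ENNReal.orderIsoRpow p.toReal hpr).map_iSup u
    have hsup_root : ∀ u : ι → ℝ≥0∞, (⨆ i, u i) ^ (1 / p.toReal) = ⨆ i, u i ^ (1 / p.toReal) :=
      fun u => (ENNReal.orderIsoRpow (1 / p.toReal) (by positivity)).map_iSup u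
    have hdir_rpow : Directed (· ≤ ·) fun i x => f i x ^ p.toReal := fun i j =>
      let ⟨k, hik, hjk⟩ := hdir i j
      ⟨k, fun x => ENNReal.rpow_le_rpow (hik x) hpr.le,
        fun x => ENNReal.rpow_le_rpow (hjk x) hpr.le⟩
    simp only [eLpNorm_eq_lintegral_rpow_enorm_toReal hp hp_top, enorm_eq_self, hsup_rpow]
    rw [lintegral_iSup_directed (fun i => (hf i).pow_const _) hdir_rpow, hsup_root]

theorem eLpNorm_tsum_le (hp : 1 ≤ p) {f : ι → α → ℝ≥0∞} (hf : ∀ i, AEMeasurable (f i) μ) :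
    eLpNorm (fun x => ∑' i, f i x) p μ ≤ ∑' i, eLpNorm (f i) p μ := by
  have hdir : Directed (· ≤ ·) fun (s : Finset ι) (x : α) => ∑ i ∈ s, f i x :=
    Monotone.directed_le fun _ _ hst _ => Finset.sum_le_sum_of_subset hst
  simp only [ENNReal.tsum_eq_iSup_sum]
  rw [eLpNorm_iSup_of_directed (zero_lt_one.trans_le hp).ne' (fun s => by fun_prop) hdir]
  refine iSup_mono fun s => ?_
  simpa only [← Finset.sum_apply] using
    eLpNorm_sum_le (fun i _ => (hf i).aestronglyMeasurable) hp

theorem eLpNorm_rpow_le_tsum_of_ae_rpow_le {r : ℝ} (hr : 0 < r) (hrp : ENNReal.ofReal r ≤ p)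
    {f : ι → α → ℝ≥0∞} {h : α → ℝ≥0∞} (hf : ∀ i, AEMeasurable (f i) μ)
    (hle : ∀ᵐ x ∂μ, h x ^ r ≤ ∑' i, f i x ^ r) :
    eLpNorm h p μ ^ r ≤ ∑' i, eLpNorm (f i) p μ ^ r := by
  have hr0 : ENNReal.ofReal r ≠ 0 := (ENNReal.ofReal_pos.2 hr).ne'
  have hone : 1 ≤ p / ENNReal.ofReal r := by
    rwa [ENNReal.le_div_iff_mul_le (.inl hr0) (.inl ENNReal.ofReal_ne_top), one_mul]
  have hpow : ∀ u : α → ℝ≥0∞,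
      eLpNorm u p μ ^ r = eLpNorm (fun x => u x ^ r) (p / ENNReal.ofReal r) μ := fun u => by
    simpa only [enorm_eq_self, ENNReal.div_mul_cancel hr0 ENNReal.ofReal_ne_top] using
      (eLpNorm_enorm_rpow (p := p / ENNReal.ofReal r) (μ := μ) u hr).symm
  simp only [hpow]
  calc eLpNorm (fun x => h x ^ r) (p / ENNReal.ofReal r) μ
      ≤ eLpNorm (fun x => ∑' i, f i x ^ r) (p / ENNReal.ofReal r) μ :=
        eLpNorm_mono_enorm_ae hle
    _ ≤ ∑' i, eLpNorm (fun x => f i x ^ r) (p / ENNReal.ofReal r) μ :=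
        eLpNorm_tsum_le hone fun i => (hf i).pow_const r

end PowerTriangle

section LpOn

variable {n : ℕ} {p : ℝ≥0∞} {s t : Set (EuclideanSpace ℝ (Fin n))}

theorem LpOn_eq_eLpNorm (hp : 0 < p) (F : EuclideanSpace ℝ (Fin n) → ℝ≥0∞)
    (s : Set (EuclideanSpace ℝ (Fin n))) : LpOn p F s = eLpNorm F p (volume.restrict s) := by
  rcases eq_or_ne p ∞ with rfl | hp_top
  · simp [LpOn, eLpNormEssSup]
  · simp [LpOn, hp_top, eLpNorm_eq_lintegral_rpow_enorm_toReal hp.ne' hp_top]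

theorem LpOn_zero (hp : 0 < p) (s : Set (EuclideanSpace ℝ (Fin n))) : LpOn p 0 s = 0 := by
  rw [LpOn_eq_eLpNorm hp, eLpNorm_zero]

theorem LpOn_mono_set (hp : 0 < p) (F : EuclideanSpace ℝ (Fin n) → ℝ≥0∞) (hst : s ⊆ t) :
    LpOn p F s ≤ LpOn p F t := by
  rw [LpOn_eq_eLpNorm hp, LpOn_eq_eLpNorm hp]
  exact eLpNorm_mono_measure _ (Measure.restrict_mono_set _ hst)

theorem LpOn_const_mul (hp : 0 < p) (c : ℝ≥0∞) {F : EuclideanSpace ℝ (Fin n) → ℝ≥0∞}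
    (hF : AEMeasurable F (volume.restrict s)) :
    LpOn p (fun x => c * F x) s = c * LpOn p F s := by
  unfold LpOn
  split_ifs with hp_top
  · exact ENNReal.essSup_const_mul
  · have hpr : 0 < p.toReal := ENNReal.toReal_pos hp.ne' hp_top
    simp only [ENNReal.mul_rpow_of_nonneg _ _ hpr.le]
    rw [lintegral_const_mul'' _ (hF.pow_const _), ENNReal.mul_rpow_of_nonneg _ _ (by positivity),
      one_div, ENNReal.rpow_rpow_inv hpr.ne']

theorem LpOn_tsum_rpow_le {ι : Type*} [Countable ι] {r : ℝ} (hr : 0 < r) (hr1 : r ≤ 1)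
    (hrp : ENNReal.ofReal r ≤ p) {f : ι → EuclideanSpace ℝ (Fin n) → ℝ≥0∞}
    (hf : ∀ i, AEMeasurable (f i) (volume.restrict s)) :
    LpOn p (fun x => ∑' i, f i x) s ^ r ≤ ∑' i, LpOn p (f i) s ^ r := by
  have hp : 0 < p := (ENNReal.ofReal_pos.2 hr).trans_le hrp
  simp only [LpOn_eq_eLpNorm hp]
  exact eLpNorm_rpow_le_tsum_of_ae_rpow_le hr hrp hf
    (.of_forall fun x => rpow_tsum_le_tsum_rpow (f · x) hr hr1)

end LpOn

/-- The shift `(S_m a)_j = a_{j-m}` by `m ∈ ℤ` of a sequence indexed by `ℕ`, with `a_i = 0` for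
`i < 0`. A discrete convolution is a superposition of such shifts. -/
noncomputable def shiftSeq {β : Type*} [Zero β] (m : ℤ) (a : ℕ → β) (j : ℕ) : β :=
  Function.extend (Nat.cast : ℕ → ℤ) a 0 (j - m)

section ShiftSeq

variable {β γ : Type*} [Zero β] [Zero γ]

theorem shiftSeq_of_eq_add {m : ℤ} {i j : ℕ} (hij : (j : ℤ) = i + m) (a : ℕ → β) :
    shiftSeq m a j = a i := by
  rw [shiftSeq, hij, add_sub_cancel_right]
  exact Nat.cast_injective.extend_apply a 0 i

theorem shiftSeq_of_lt {m : ℤ} {j : ℕ} (hjm : (j : ℤ) < m) (a : ℕ → β) : shiftSeq m a j = 0 :=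
  Function.extend_apply' _ _ _ (by omega)

theorem shiftSeq_induction {P : β → Prop} {a : ℕ → β} (zero : P 0) (entry : ∀ i, P (a i)) (m : ℤ)
    (j : ℕ) : P (shiftSeq m a j) := by
  rcases lt_or_ge (j : ℤ) m with hjm | hmj
  · rwa [shiftSeq_of_lt hjm]
  · obtain ⟨i, hi⟩ := Int.eq_ofNat_of_zero_le (sub_nonneg.2 hmj)
    rw [shiftSeq_of_eq_add (sub_eq_iff_eq_add.1 hi)]
    exact entry i

theorem map_shiftSeq (F : β → γ) (hF : F 0 = 0) (m : ℤ) (a : ℕ → β) (j : ℕ) :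
    F (shiftSeq m a j) = shiftSeq m (fun i => F (a i)) j := by
  rw [shiftSeq, Function.apply_extend F]
  congr 1
  exact funext fun _ => hF

theorem tsum_sub_mul_eq_tsum_mul_shiftSeq {α : Type*} (a : ℤ → ℝ≥0∞) (g : ℕ → α → ℝ≥0∞) (j : ℕ)
    (x : α) : ∑' k : ℕ, a (j - k) * g k x = ∑' m : ℤ, a m * shiftSeq m g j x := by
  have hinj : Function.Injective fun k : ℕ => (j : ℤ) - k := fun k l hkl => by simpa using hkl
  have hsupp : (Function.support fun m : ℤ => a m * shiftSeq m g j x) ⊆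
      Set.range fun k : ℕ => (j : ℤ) - k := by
    intro m hm
    by_cases hjm : (j : ℤ) < m
    · simp [shiftSeq_of_lt hjm] at hm
    · exact ⟨(j - m).toNat, by dsimp only; omega⟩
  rw [← hinj.tsum_eq hsupp]
  refine tsum_congr fun k => ?_
  rw [shiftSeq_of_eq_add (add_sub_cancel (k : ℤ) j).symm]

end ShiftSeq

section TailLqE

variable {q : ℝ≥0∞}

theorem tailLqE_eq_eLpNorm (hq : 0 < q) (J : ℤ) (a : ℕ → ℝ≥0∞) :
    tailLqE q J a = eLpNorm (fun j : {j : ℕ // J ≤ (j : ℤ)} => a j) q Measure.count := by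
  rcases eq_or_ne q ∞ with rfl | hq_top
  · simp [tailLqE, eLpNormEssSup]
  · simp [tailLqE, hq_top, eLpNorm_eq_lintegral_rpow_enorm_toReal hq.ne' hq_top, lintegral_count]

theorem tailLqE_mono (J : ℤ) {a b : ℕ → ℝ≥0∞} (hab : ∀ j, a j ≤ b j) :
    tailLqE q J a ≤ tailLqE q J b := by
  unfold tailLqE
  split_ifs
  · exact iSup_mono fun j => hab j
  · gcongr with j
    exact hab j

theorem tailLqE_const_mul (hq : 0 < q) (J : ℤ) (c : ℝ≥0∞) (a : ℕ → ℝ≥0∞) :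
    tailLqE q J (fun j => c * a j) = c * tailLqE q J a := by
  unfold tailLqE
  split_ifs with hq_top
  · exact (ENNReal.mul_iSup _ _).symm
  · have hqr : 0 < q.toReal := ENNReal.toReal_pos hq.ne' hq_top
    simp only [ENNReal.mul_rpow_of_nonneg _ _ hqr.le]
    rw [ENNReal.tsum_mul_left, ENNReal.mul_rpow_of_nonneg _ _ (by positivity), one_div,
      ENNReal.rpow_rpow_inv hqr.ne']

theorem tailLqE_rpow_le_tsum_of_rpow_le {ι : Type*} [Countable ι] {r : ℝ} (hr : 0 < r)
    (hrq : ENNReal.ofReal r ≤ q) (J : ℤ) {a : ι → ℕ → ℝ≥0∞} {b : ℕ → ℝ≥0∞}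
    (hle : ∀ j, b j ^ r ≤ ∑' i, a i j ^ r) :
    tailLqE q J b ^ r ≤ ∑' i, tailLqE q J (a i) ^ r := by
  have hq : 0 < q := (ENNReal.ofReal_pos.2 hr).trans_le hrq
  simp only [tailLqE_eq_eLpNorm hq]
  exact eLpNorm_rpow_le_tsum_of_ae_rpow_le hr hrq
    (fun i => (measurable_of_countable _).aemeasurable) (.of_forall fun j => hle j)

theorem tsum_tail_shiftSeq_le {J J' m : ℤ} (hJ : J' ≤ J - m) (b : ℕ → ℝ≥0∞) :
    ∑' j : {j : ℕ // J ≤ (j : ℤ)}, shiftSeq m b j ≤ ∑' i : {i : ℕ // J' ≤ (i : ℤ)}, b i := by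
  have hsupp : (Function.support fun j : {j : ℕ // J ≤ (j : ℤ)} => shiftSeq m b j) ⊆
      {j | m ≤ (j : ℕ)} := fun j hj => not_lt.1 fun hjm => hj (shiftSeq_of_lt hjm b)
  let φ : {j : {j : ℕ // J ≤ (j : ℤ)} | m ≤ (j : ℕ)} → {i : ℕ // J' ≤ (i : ℤ)} := fun j =>
    ⟨((j.1 : ℕ) - m).toNat, by have := j.1.2; omega⟩
  have hφ : ∀ j, ((j.1 : ℕ) : ℤ) = (φ j : ℕ) + m := fun j => by
    have : m ≤ (j.1 : ℕ) := j.2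
    simp only [φ]
    omega
  have hφ_inj : Function.Injective φ := fun j k hjk => by
    have hj := hφ j
    rw [hjk, ← hφ k] at hj
    exact Subtype.ext (Subtype.ext (Nat.cast_injective hj))
  calc ∑' j : {j : ℕ // J ≤ (j : ℤ)}, shiftSeq m b j
      = ∑' j : {j : {j : ℕ // J ≤ (j : ℤ)} | m ≤ (j : ℕ)}, shiftSeq m b j.1 :=
        (tsum_subtype_eq_of_support_subset hsupp).symm
    _ = ∑' j, b (φ j) := tsum_congr fun j => shiftSeq_of_eq_add (hφ j) b
    _ ≤ ∑' i : {i : ℕ // J' ≤ (i : ℤ)}, b i :=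
        ENNReal.tsum_comp_le_tsum_of_injective hφ_inj fun i => b i

theorem tailLqE_shiftSeq_le (hq : 0 < q) {J J' m : ℤ} (hJ : J' ≤ J - m) (a : ℕ → ℝ≥0∞) :
    tailLqE q J (shiftSeq m a) ≤ tailLqE q J' a := by
  unfold tailLqE
  split_ifs with hq_top
  · refine iSup_le fun j => ?_
    rcases lt_or_ge (j : ℤ) m with hjm | hmj
    · exact (shiftSeq_of_lt hjm a).trans_le zero_le
    · obtain ⟨i, hi⟩ := Int.eq_ofNat_of_zero_le (sub_nonneg.2 hmj)
      rw [shiftSeq_of_eq_add (sub_eq_iff_eq_add.1 hi)]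
      exact le_iSup (fun i : {i : ℕ // J' ≤ (i : ℤ)} => a i) ⟨i, by have := j.2; omega⟩
  · have hqr : 0 < q.toReal := ENNReal.toReal_pos hq.ne' hq_top
    simp only [map_shiftSeq (· ^ q.toReal) (ENNReal.zero_rpow_of_pos hqr)]
    gcongr
    exact tsum_tail_shiftSeq_le hJ _

end TailLqE

theorem dyadicCube_subset_dyadicCube_sub {n : ℕ} (J : ℤ) (v : Fin n → ℤ) (l : ℕ) :
    dyadicCube n J v ⊆ dyadicCube n (J - l) fun i => v i / 2 ^ l := by
  intro x hx i
  have hscale : (2 : ℝ) ^ (-(J - (l : ℤ))) = 2 ^ (-J) * 2 ^ l := by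
    rw [neg_sub, sub_eq_add_neg, add_comm, zpow_add₀ two_ne_zero, zpow_natCast]
  have hlow : (2 : ℝ) ^ l * ((v i / 2 ^ l : ℤ) : ℝ) ≤ v i := by
    exact_mod_cast Int.mul_ediv_self_le (by positivity)
  have hup : (v i : ℝ) + 1 ≤ 2 ^ l * (((v i / 2 ^ l : ℤ) : ℝ) + 1) := by
    have : v i + 1 ≤ 2 ^ l * (v i / 2 ^ l + 1) := by
      linarith [Int.lt_mul_ediv_self_add (x := v i) (k := 2 ^ l) (by positivity)]
    exact_mod_cast this
  rw [hscale, mul_assoc, mul_assoc]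
  exact ⟨lt_of_le_of_lt (by gcongr) (hx i).1, (hx i).2.trans_le (by gcongr)⟩

section LqLpTauE

variable {n : ℕ} {p q : ℝ≥0∞} {r : ℝ}

theorem weight_mul_tailLqE_le_lqLpTauE (q p : ℝ≥0∞) (τ : ℝ)
    (F : ℕ → EuclideanSpace ℝ (Fin n) → ℝ≥0∞) (J : ℤ) (v : Fin n → ℤ) :
    ENNReal.ofReal ((2 : ℝ) ^ ((n : ℝ) * (J : ℝ) * τ)) *
        tailLqE q J (fun j => LpOn p (F j) (dyadicCube n J v)) ≤ lqLpTauE n q p τ F :=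
  le_iSup₂ (f := fun (J : ℤ) (v : Fin n → ℤ) =>
    ENNReal.ofReal ((2 : ℝ) ^ ((n : ℝ) * (J : ℝ) * τ)) *
      tailLqE q J (fun j => LpOn p (F j) (dyadicCube n J v))) J v

theorem lqLpTauE_const_mul (hp : 0 < p) (hq : 0 < q) (τ : ℝ) (c : ℝ≥0∞)
    {F : ℕ → EuclideanSpace ℝ (Fin n) → ℝ≥0∞} (hF : ∀ j, AEMeasurable (F j)) :
    lqLpTauE n q p τ (fun j x => c * F j x) = c * lqLpTauE n q p τ F := by
  simp only [lqLpTauE, LpOn_const_mul hp c (hF _).restrict, tailLqE_const_mul hq,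
    mul_left_comm _ c, ENNReal.mul_iSup]

theorem lqLpTauE_tsum_rpow_le {ι : Type*} [Countable ι] (hr : 0 < r) (hr1 : r ≤ 1)
    (hrp : ENNReal.ofReal r ≤ p) (hrq : ENNReal.ofReal r ≤ q) (τ : ℝ)
    {F : ι → ℕ → EuclideanSpace ℝ (Fin n) → ℝ≥0∞} (hF : ∀ i j, AEMeasurable (F i j)) :
    lqLpTauE n q p τ (fun j x => ∑' i, F i j x) ^ r ≤ ∑' i, lqLpTauE n q p τ (F i) ^ r := by
  rw [← ENNReal.le_rpow_inv_iff hr]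
  refine iSup₂_le fun J v => (ENNReal.le_rpow_inv_iff hr).2 ?_
  set w := ENNReal.ofReal ((2 : ℝ) ^ ((n : ℝ) * (J : ℝ) * τ))
  have htail : tailLqE q J (fun j => LpOn p (fun x => ∑' i, F i j x) (dyadicCube n J v)) ^ r ≤
      ∑' i, tailLqE q J (fun j => LpOn p (F i j) (dyadicCube n J v)) ^ r :=
    tailLqE_rpow_le_tsum_of_rpow_le hr hrq J fun j =>
      LpOn_tsum_rpow_le hr hr1 hrp fun i => (hF i j).restrict
  calc (w * tailLqE q J (fun j => LpOn p (fun x => ∑' i, F i j x) (dyadicCube n J v))) ^ r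
      ≤ w ^ r * ∑' i, tailLqE q J (fun j => LpOn p (F i j) (dyadicCube n J v)) ^ r := by
        rw [ENNReal.mul_rpow_of_nonneg _ _ hr.le]
        gcongr
    _ = ∑' i, (w * tailLqE q J (fun j => LpOn p (F i j) (dyadicCube n J v))) ^ r := by
        simp only [ENNReal.mul_rpow_of_nonneg _ _ hr.le, ENNReal.tsum_mul_left]
    _ ≤ ∑' i, lqLpTauE n q p τ (F i) ^ r := by
        gcongr with i
        exact weight_mul_tailLqE_le_lqLpTauE q p τ (F i) J v

theorem lqLpTauE_shiftSeq_le (hp : 0 < p) (hq : 0 < q) (τ : ℝ) (m : ℤ)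
    (g : ℕ → EuclideanSpace ℝ (Fin n) → ℝ≥0∞) :
    lqLpTauE n q p τ (shiftSeq m g) ≤
      ENNReal.ofReal ((2 : ℝ) ^ ((n : ℝ) * τ * |(m : ℝ)|)) * lqLpTauE n q p τ g := by
  refine iSup₂_le fun J v => ?_
  set J' : ℤ := J - m.natAbs with hJ'
  set v' : Fin n → ℤ := fun i => v i / 2 ^ m.natAbs
  have hweight : (2 : ℝ) ^ ((n : ℝ) * (J : ℝ) * τ) =
      2 ^ ((n : ℝ) * τ * |(m : ℝ)|) * 2 ^ ((n : ℝ) * (J' : ℝ) * τ) := by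
    rw [← Real.rpow_add two_pos, hJ', Int.cast_sub, Int.natCast_natAbs, Int.cast_abs]
    ring_nf
  have htail : tailLqE q J (fun j => LpOn p (shiftSeq m g j) (dyadicCube n J v)) ≤
      tailLqE q J' (fun j => LpOn p (g j) (dyadicCube n J' v')) :=
    calc tailLqE q J (fun j => LpOn p (shiftSeq m g j) (dyadicCube n J v))
        = tailLqE q J (shiftSeq m fun j => LpOn p (g j) (dyadicCube n J v)) :=
          congrArg _ <| funext <| map_shiftSeq (LpOn p · (dyadicCube n J v)) (LpOn_zero hp _) m g
      _ ≤ tailLqE q J' (fun j => LpOn p (g j) (dyadicCube n J v)) :=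
          tailLqE_shiftSeq_le hq (by omega) _
      _ ≤ tailLqE q J' (fun j => LpOn p (g j) (dyadicCube n J' v')) :=
          tailLqE_mono J' fun j =>
            LpOn_mono_set hp (g j) (dyadicCube_subset_dyadicCube_sub J v m.natAbs)
  rw [hweight, ENNReal.ofReal_mul (by positivity), mul_assoc]
  gcongr
  exact (by gcongr : _ ≤ _).trans (weight_mul_tailLqE_le_lqLpTauE q p τ g J' v')

theorem lqLpTauE_conv_le (hr : 0 < r) (hr1 : r ≤ 1) (hrp : ENNReal.ofReal r ≤ p)
    (hrq : ENNReal.ofReal r ≤ q) (τ : ℝ) (a : ℤ → ℝ≥0∞)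
    {g : ℕ → EuclideanSpace ℝ (Fin n) → ℝ≥0∞} (hg : ∀ j, AEMeasurable (g j)) :
    lqLpTauE n q p τ (fun j x => ∑' k : ℕ, a (j - k) * g k x) ≤
      (∑' m : ℤ, (a m * ENNReal.ofReal ((2 : ℝ) ^ ((n : ℝ) * τ * |(m : ℝ)|))) ^ r) ^ r⁻¹ *
        lqLpTauE n q p τ g := by
  have hp : 0 < p := (ENNReal.ofReal_pos.2 hr).trans_le hrp
  have hq : 0 < q := (ENNReal.ofReal_pos.2 hr).trans_le hrq
  have hshift : ∀ m j, AEMeasurable (shiftSeq m g j) := fun m =>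
    shiftSeq_induction (P := (AEMeasurable · volume)) aemeasurable_zero hg m
  rw [← ENNReal.rpow_le_rpow_iff hr, ENNReal.mul_rpow_of_nonneg _ _ hr.le,
    ENNReal.rpow_inv_rpow hr.ne', ← ENNReal.tsum_mul_right]
  simp only [tsum_sub_mul_eq_tsum_mul_shiftSeq]
  calc lqLpTauE n q p τ (fun j x => ∑' m : ℤ, a m * shiftSeq m g j x) ^ r
      ≤ ∑' m : ℤ, lqLpTauE n q p τ (fun j x => a m * shiftSeq m g j x) ^ r :=
        lqLpTauE_tsum_rpow_le hr hr1 hrp hrq τ fun m j => (hshift m j).const_mul _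
    _ = ∑' m : ℤ, (a m * lqLpTauE n q p τ (shiftSeq m g)) ^ r := by
        simp only [lqLpTauE_const_mul hp hq τ _ (hshift _)]
    _ ≤ ∑' m : ℤ, (a m * (ENNReal.ofReal ((2 : ℝ) ^ ((n : ℝ) * τ * |(m : ℝ)|)) *
          lqLpTauE n q p τ g)) ^ r := by
        gcongr with m
        exact lqLpTauE_shiftSeq_le hp hq τ m g
    _ = ∑' m : ℤ, (a m * ENNReal.ofReal ((2 : ℝ) ^ ((n : ℝ) * τ * |(m : ℝ)|))) ^ r *
          lqLpTauE n q p τ g ^ r := by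
        simp only [← mul_assoc, ENNReal.mul_rpow_of_nonneg _ _ hr.le]

end LqLpTauE

theorem summable_two_rpow_neg_mul_abs {ε : ℝ} (hε : 0 < ε) :
    Summable fun m : ℤ => (2 : ℝ) ^ (-ε * |(m : ℝ)|) := by
  have hnat : Summable fun k : ℕ => (2 : ℝ) ^ (-ε * (k : ℝ)) := by
    simp_rw [Real.rpow_mul zero_le_two, Real.rpow_natCast]
    exact summable_geometric_of_lt_one (by positivity)
      (Real.rpow_lt_one_of_one_lt_of_neg one_lt_two (neg_lt_zero.2 hε))
  refine Summable.of_nat_of_neg ?_ ?_ <;> simpa using hnat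

theorem tsum_two_rpow_mul_abs_rpow_ne_top {δ σ r : ℝ} (hσδ : σ < δ) (hr : 0 < r) :
    ∑' m : ℤ, (ENNReal.ofReal ((2 : ℝ) ^ (-δ * |(m : ℝ)|)) *
      ENNReal.ofReal ((2 : ℝ) ^ (σ * |(m : ℝ)|))) ^ r ≠ ∞ := by
  have hterm : ∀ m : ℤ, (ENNReal.ofReal ((2 : ℝ) ^ (-δ * |(m : ℝ)|)) *
      ENNReal.ofReal ((2 : ℝ) ^ (σ * |(m : ℝ)|))) ^ r =
        ENNReal.ofReal ((2 : ℝ) ^ (-((δ - σ) * r) * |(m : ℝ)|)) := fun m => by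
    rw [← ENNReal.ofReal_mul (by positivity), ← Real.rpow_add two_pos,
      ENNReal.ofReal_rpow_of_pos (by positivity), ← Real.rpow_mul zero_le_two]
    ring_nf
  rw [tsum_congr hterm]
  exact (summable_two_rpow_neg_mul_abs (mul_pos (sub_pos.2 hσδ) hr)).tsum_ofReal_ne_top

theorem stmt5_general (n : ℕ) (p q : ℝ≥0∞) (hp : 0 < p) (hq : 0 < q) (τ δ : ℝ)
    (hδ : (n : ℝ) * τ < δ) :
    ∃ C : ℝ≥0∞, 0 < C ∧ C < ∞ ∧
      ∀ g : ℕ → EuclideanSpace ℝ (Fin n) → ℝ≥0∞, (∀ j, AEMeasurable (g j)) →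
        lqLpTauE n q p τ
            (fun j x => ∑' k : ℕ, ENNReal.ofReal ((2 : ℝ) ^ (-δ * |(j : ℝ) - (k : ℝ)|)) * g k x)
          ≤ C * lqLpTauE n q p τ g := by
  obtain ⟨r, -, hr, hrlt⟩ :=
    ENNReal.lt_iff_exists_real_btwn.1 (lt_min one_pos (lt_min hp hq))
  obtain ⟨hr1, hrp, hrq⟩ := by simpa only [lt_min_iff] using hrlt
  replace hr : 0 < r := ENNReal.ofReal_pos.1 hr
  replace hr1 : r ≤ 1 := ENNReal.ofReal_le_one.1 hr1.le
  set a : ℤ → ℝ≥0∞ := fun m => ENNReal.ofReal ((2 : ℝ) ^ (-δ * |(m : ℝ)|)) with ha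
  set K : ℝ≥0∞ := ∑' m : ℤ, (a m * ENNReal.ofReal ((2 : ℝ) ^ ((n : ℝ) * τ * |(m : ℝ)|))) ^ r
  have hK_top : K ≠ ∞ := tsum_two_rpow_mul_abs_rpow_ne_top hδ hr
  have hK_pos : 0 < K := lt_of_lt_of_le (by simp [ha]) (ENNReal.le_tsum 0)
  refine ⟨K ^ r⁻¹, ENNReal.rpow_pos hK_pos hK_top,
    ENNReal.rpow_lt_top_of_nonneg (by positivity) hK_top, fun g hg => ?_⟩
  simpa only [ha, Int.cast_sub, Int.cast_natCast] using
    lqLpTauE_conv_le hr hr1 hrp.le hrq.le τ a hg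

/-- **Discrete convolution inequality on `ℓ^q L^p_τ`.** For `0 < p,q ≤ ∞`, `τ ≥ 0` and
`δ > nτ`, there is `C > 0` with
`‖(Σ_k 2^{−δ|j−k|} g_k)_j‖_{ℓ^q L^p_τ} ≤ C ‖(g_j)_j‖_{ℓ^q L^p_τ}`. -/
theorem stmt5 (n : ℕ) (p q : ℝ≥0∞) (hp : 0 < p) (hq : 0 < q) (τ δ : ℝ)
    (hτ : 0 ≤ τ) (hδ : (n : ℝ) * τ < δ) :
    ∃ C : ℝ≥0∞, 0 < C ∧ C < ∞ ∧
      ∀ g : ℕ → EuclideanSpace ℝ (Fin n) → ℝ≥0∞, (∀ j, Measurable (g j)) →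
        lqLpTauE n q p τ
            (fun j x => ∑' k : ℕ, ENNReal.ofReal ((2 : ℝ) ^ (-δ * |(j : ℝ) - (k : ℝ)|)) * g k x)
          ≤ C * lqLpTauE n q p τ g := by
  obtain ⟨C, hC_pos, hC_top, hC⟩ := stmt5_general n p q hp hq τ δ hδ
  exact ⟨C, hC_pos, hC_top, fun g hg => hC g fun j => (hg j).aemeasurable⟩
end

section
/- Let η, θ be sequences of Schwartz functions on ℝⁿ with η_j(x) = 2^{(j−1)n}η₁(2^{j−1}x) and θ_k(x) = 2^{(k−1)n}θ₁(2^{k−1}x) for j,k ≥ 1, where η₁ and θ₁ have vanishing moments of all orders (∫ x^α η₁ = ∫ x^α θ₁ = 0 for all multi-indices α). Then for every N > 0 there is C = C(η,θ,N) > 0 with ∫_{ℝⁿ} |η_j ∗ θ_k(x)| (1 + 2^k|x|)^N dx ≤ C 2^{−N|j−k|} for all j, k ≥ 0. -/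
open MeasureTheory
open scoped ENNReal

/-!
Let `f` live at scale `a` and `g` at the finer scale `b ≥ a`. Dilating by `a⁻¹` reduces to `a = 1`,
where the convolution at `x` is `∫ f (x - z / b) * g z`. Subtracting the Taylor polynomial of `f` at
`x` made of the terms of order `< M` does not change this integral, since the moments of `g` of
order `< M` vanish, and Schwartz decay bounds what is left by a constant times
`b⁻¹ ^ M * (1 + ‖x‖) ^ (-K)` for every `K`. Undoing the dilation gives the factor `(a / b) ^ M`, and
a weight `(1 + c‖x‖) ^ N` with `a ≤ c` costs `(c / a) ^ N`.

The weight in the estimate lives at the scale of `θ_k`. If `θ_k` is the finer function, the weight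
costs `2 ^ (N (k - j))`, so moments of `θ₁` up to order `2N` are spent to gain `2 ^ (-N (k - j))`;
if `η_j` is the finer one, the weight is free and moments of `η₁` up to order `N` suffice.
-/

open Module (finrank)
open ContinuousLinearMap (mul)
open scoped Convolution SchwartzMap

section Taylor

variable {E F : Type*} [NormedAddCommGroup E] [NormedSpace ℝ E]
  [NormedAddCommGroup F] [NormedSpace ℝ F]

/-- The Taylor polynomial of `f` at `x`, made of the terms of order `< M`, as a function of the
displacement `y` from `x`. -/
noncomputable def taylorSum (f : E → F) (M : ℕ) (x y : E) : F :=
  ∑ k ∈ Finset.range M, (k.factorial : ℝ)⁻¹ • iteratedFDeriv ℝ k f x (fun _ ↦ y)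

theorem taylorSum_smul (f : E → F) (M : ℕ) (x y : E) (t : ℝ) :
    taylorSum f M x (t • y) =
      ∑ k ∈ Finset.range M,
        (((k.factorial : ℝ)⁻¹ * t ^ k) • iteratedFDeriv ℝ k f x) (fun _ ↦ y) := by
  refine Finset.sum_congr rfl fun k _ ↦ ?_
  have := (iteratedFDeriv ℝ k f x).map_smul_univ (fun _ ↦ t) (fun _ ↦ y)
  simp only [Finset.prod_const, Finset.card_univ, Fintype.card_fin] at this
  rw [this, smul_smul, smul_apply]

theorem norm_sub_taylorSum_le [CompleteSpace F] {f : E → F} {M : ℕ} {x y : E} {B : ℝ}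
    (hf : ∀ t ∈ Set.Icc (0 : ℝ) 1, ContDiffAt ℝ M f (x + t • y))
    (hB : ∀ t ∈ Set.Icc (0 : ℝ) 1, ‖iteratedFDeriv ℝ M f (x + t • y)‖ ≤ B) :
    ‖f (x + y) - taylorSum f M x y‖ ≤ B * ‖y‖ ^ M := by
  have hBy : ∀ t ∈ Set.Icc (0 : ℝ) 1,
      ‖iteratedFDeriv ℝ M f (x + t • y) (fun _ ↦ y)‖ ≤ B * ‖y‖ ^ M := fun t ht ↦ by
    simpa using (iteratedFDeriv ℝ M f (x + t • y)).le_of_opNorm_le (hB t ht) (fun _ ↦ y)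
  rcases M with _ | m
  · simpa [taylorSum] using hBy 1 (by simp)
  have hintegrand : ∀ t ∈ Set.uIoc (0 : ℝ) 1,
      ‖(1 - t) ^ m • iteratedFDeriv ℝ (m + 1) f (x + t • y) (fun _ ↦ y)‖ ≤
        B * ‖y‖ ^ (m + 1) := by
    intro t ht
    obtain ⟨ht0, ht1⟩ : 0 < t ∧ t ≤ 1 := by rwa [Set.uIoc_of_le zero_le_one] at ht
    rw [norm_smul, norm_pow, Real.norm_of_nonneg (by linarith)]
    exact (mul_le_of_le_one_left (norm_nonneg _)
      (pow_le_one₀ (by linarith) (by linarith))).trans (hBy t ⟨ht0.le, ht1⟩)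
  have hfactorial : ‖(m.factorial : ℝ)⁻¹‖ ≤ 1 := by
    rw [norm_inv, RCLike.norm_natCast]
    exact inv_le_one_of_one_le₀ (by exact_mod_cast m.factorial_pos)
  rw [taylorSum, map_add_eq_sum_add_integral_iteratedFDeriv (f := f) (x := x) (y := y) (n := m)
    (by exact_mod_cast hf), add_sub_cancel_left, norm_smul]
  refine (mul_le_of_le_one_left (norm_nonneg _) hfactorial).trans ?_
  simpa using intervalIntegral.norm_integral_le_of_norm_le_const hintegrand

end Taylor

section SchwartzDecay

variable {E F : Type*} [NormedAddCommGroup E] [NormedSpace ℝ E]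
  [NormedAddCommGroup F] [NormedSpace ℝ F]

theorem one_add_norm_le_one_add_norm_add_mul {G : Type*} [SeminormedAddCommGroup G] (x y : G) :
    1 + ‖x‖ ≤ (1 + ‖x + y‖) * (1 + ‖y‖) := by
  have htriangle : ‖x‖ ≤ ‖x + y‖ + ‖y‖ := by simpa using norm_sub_le (x + y) y
  nlinarith [norm_nonneg (x + y), norm_nonneg y]

theorem exists_one_add_norm_pow_mul_norm_iteratedFDeriv_add_le (f : 𝓢(E, F)) (M K : ℕ) :
    ∃ A : ℝ, 0 ≤ A ∧ ∀ x y : E,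
      (1 + ‖x‖) ^ K * ‖iteratedFDeriv ℝ M f (x + y)‖ ≤ A * (1 + ‖y‖) ^ K := by
  obtain ⟨A, hA⟩ : ∃ A : ℝ, ∀ x, (1 + ‖x‖) ^ K * ‖iteratedFDeriv ℝ M f x‖ ≤ A :=
    ⟨_, f.one_add_le_sup_seminorm_apply (𝕜 := ℝ) (m := (K, M)) le_rfl le_rfl⟩
  refine ⟨A, le_trans (by positivity) (hA 0), fun x y ↦ ?_⟩
  calc (1 + ‖x‖) ^ K * ‖iteratedFDeriv ℝ M f (x + y)‖
      ≤ ((1 + ‖x + y‖) * (1 + ‖y‖)) ^ K * ‖iteratedFDeriv ℝ M f (x + y)‖ := by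
        gcongr
        exact one_add_norm_le_one_add_norm_add_mul x y
    _ = ((1 + ‖x + y‖) ^ K * ‖iteratedFDeriv ℝ M f (x + y)‖) * (1 + ‖y‖) ^ K := by
        rw [mul_pow]
        ring
    _ ≤ A * (1 + ‖y‖) ^ K := by
        gcongr
        exact hA _

theorem exists_one_add_norm_pow_mul_norm_sub_taylorSum_le [CompleteSpace F] (f : 𝓢(E, F))
    (M K : ℕ) :
    ∃ A : ℝ, 0 ≤ A ∧ ∀ x y : E,
      (1 + ‖x‖) ^ K * ‖f (x + y) - taylorSum f M x y‖ ≤ A * (‖y‖ ^ M * (1 + ‖y‖) ^ K) := by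
  obtain ⟨A, hA0, hA⟩ := exists_one_add_norm_pow_mul_norm_iteratedFDeriv_add_le f M K
  refine ⟨A, hA0, fun x y ↦ ?_⟩
  have hderiv : ∀ t ∈ Set.Icc (0 : ℝ) 1,
      ‖iteratedFDeriv ℝ M f (x + t • y)‖ ≤ A * (1 + ‖y‖) ^ K / (1 + ‖x‖) ^ K := by
    intro t ht
    have hty : ‖t • y‖ ≤ ‖y‖ := by
      rw [norm_smul, Real.norm_of_nonneg ht.1]
      exact mul_le_of_le_one_left (norm_nonneg _) ht.2
    rw [le_div_iff₀' (by positivity)]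
    exact (hA x (t • y)).trans (by gcongr)
  have hremainder := norm_sub_taylorSum_le (fun t _ ↦ f.contDiffAt M) hderiv
  rw [div_mul_eq_mul_div, le_div_iff₀' (by positivity)] at hremainder
  exact hremainder.trans_eq (by ring)

variable [MeasurableSpace E] [BorelSpace E] [SecondCountableTopology E]
  {μ : Measure E} [μ.HasTemperateGrowth]

theorem integrable_pow_mul_one_add_norm_pow_mul_norm (g : 𝓢(E, F)) (M K : ℕ) :
    Integrable (fun z ↦ ‖z‖ ^ M * (1 + ‖z‖) ^ K * ‖g z‖) μ := by
  have hbinomial : ∀ z, ‖z‖ ^ M * (1 + ‖z‖) ^ K * ‖g z‖ =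
      ∑ i ∈ Finset.range (K + 1), (K.choose i : ℝ) * (‖z‖ ^ (M + (K - i)) * ‖g z‖) := by
    intro z
    rw [add_pow, Finset.mul_sum, Finset.sum_mul]
    refine Finset.sum_congr rfl fun i _ ↦ ?_
    rw [pow_add]
    ring
  simp only [hbinomial]
  exact integrable_finsetSum _ fun i _ ↦ (g.integrable_pow_mul μ _).const_mul _

theorem integrable_multilinear_smul {𝕜 : Type*} [RCLike 𝕜] [NormedSpace 𝕜 F] (g : 𝓢(E, F))
    {k : ℕ} (L : E [×k]→L[ℝ] 𝕜) : Integrable (fun z ↦ L (fun _ ↦ z) • g z) μ := by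
  have hL : Continuous fun z : E ↦ L (fun _ ↦ z) := L.cont.comp (by fun_prop)
  refine ((g.integrable_pow_mul μ k).const_mul ‖L‖).mono'
    (hL.smul g.continuous).aestronglyMeasurable (.of_forall fun z ↦ ?_)
  rw [norm_smul, ← mul_assoc]
  gcongr
  simpa using L.le_opNorm (fun _ ↦ z)

end SchwartzDecay

section VanishingMoments

variable {E 𝕜 : Type*} [NormedAddCommGroup E] [NormedSpace ℝ E] [RCLike 𝕜] [MeasurableSpace E]
  {μ : Measure E}

/-- All moments of `g` of order `< M` vanish. The homogeneous polynomials of degree `k` are encoded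
as the diagonals of continuous `k`-linear forms, which makes the notion independent of a choice of
coordinates and directly applicable to Taylor polynomials. -/
def HasVanishingMoments (μ : Measure E) (M : ℕ) (g : E → 𝕜) : Prop :=
  ∀ k < M, ∀ L : E [×k]→L[ℝ] 𝕜, ∫ z, L (fun _ ↦ z) * g z ∂μ = 0

theorem HasVanishingMoments.zero_order (g : E → 𝕜) : HasVanishingMoments μ 0 g :=
  fun _ hk ↦ absurd hk (Nat.not_lt_zero _)

variable [BorelSpace E] [SecondCountableTopology E] [μ.HasTemperateGrowth]

theorem integrable_multilinear_mul (g : 𝓢(E, 𝕜)) {k : ℕ} (L : E [×k]→L[ℝ] 𝕜) :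
    Integrable (fun z ↦ L (fun _ ↦ z) * g z) μ :=
  integrable_multilinear_smul g L

theorem integrable_taylorSum_mul (f : E → 𝕜) (g : 𝓢(E, 𝕜)) (M : ℕ) (x : E) (t : ℝ) :
    Integrable (fun z ↦ taylorSum f M x (t • z) * g z) μ := by
  simp only [taylorSum_smul, Finset.sum_mul]
  exact integrable_finsetSum _ fun k _ ↦ integrable_multilinear_mul g _

theorem HasVanishingMoments.integral_taylorSum_mul {g : 𝓢(E, 𝕜)} {M : ℕ}
    (hg : HasVanishingMoments μ M g) (f : E → 𝕜) (x : E) (t : ℝ) :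
    ∫ z, taylorSum f M x (t • z) * g z ∂μ = 0 := by
  simp only [taylorSum_smul, Finset.sum_mul]
  rw [integral_finsetSum _ fun k _ ↦ integrable_multilinear_mul g _]
  exact Finset.sum_eq_zero fun k hk ↦ hg k (Finset.mem_range.1 hk) _

theorem integrable_comp_sub_smul_mul (f g : 𝓢(E, 𝕜)) (x : E) (t : ℝ) :
    Integrable (fun z ↦ f (x - t • z) * g z) μ :=
  g.integrable.bdd_mul (f.continuous.comp (by fun_prop)).aestronglyMeasurable
    (.of_forall fun _ ↦ f.norm_le_seminorm ℝ _)

theorem HasVanishingMoments.exists_norm_integral_comp_sub_smul_mul_le {g : 𝓢(E, 𝕜)} {M : ℕ}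
    (hg : HasVanishingMoments μ M g) (f : 𝓢(E, 𝕜)) (K : ℕ) :
    ∃ C : ℝ, 0 ≤ C ∧ ∀ t ∈ Set.Icc (0 : ℝ) 1, ∀ x : E,
      (1 + ‖x‖) ^ K * ‖∫ z, f (x - t • z) * g z ∂μ‖ ≤ C * t ^ M := by
  obtain ⟨A, hA0, hA⟩ := exists_one_add_norm_pow_mul_norm_sub_taylorSum_le f M K
  refine ⟨A * ∫ z, ‖z‖ ^ M * (1 + ‖z‖) ^ K * ‖g z‖ ∂μ, by positivity, fun t ⟨ht0, ht1⟩ x ↦ ?_⟩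
  have hsubtract : ∫ z, f (x - t • z) * g z ∂μ =
      ∫ z, (f (x - t • z) - taylorSum f M x (-t • z)) * g z ∂μ := by
    simp only [sub_mul]
    rw [integral_sub (integrable_comp_sub_smul_mul f g x t) (integrable_taylorSum_mul f g M x _),
      hg.integral_taylorSum_mul, sub_zero]
  have hremainder : ∀ z, ‖(1 + ‖x‖) ^ K • ((f (x - t • z) - taylorSum f M x (-t • z)) * g z)‖ ≤
      A * t ^ M * (‖z‖ ^ M * (1 + ‖z‖) ^ K * ‖g z‖) := by
    intro z
    have hnorm : ‖-t • z‖ = t * ‖z‖ := by rw [norm_smul, norm_neg, Real.norm_of_nonneg ht0]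
    have hle : t * ‖z‖ ≤ ‖z‖ := mul_le_of_le_one_left (norm_nonneg _) ht1
    calc ‖(1 + ‖x‖) ^ K • ((f (x - t • z) - taylorSum f M x (-t • z)) * g z)‖
        = (1 + ‖x‖) ^ K * ‖f (x + -t • z) - taylorSum f M x (-t • z)‖ * ‖g z‖ := by
          rw [norm_smul, norm_mul, Real.norm_of_nonneg (by positivity), neg_smul, ← sub_eq_add_neg,
            mul_assoc]
      _ ≤ A * ((t * ‖z‖) ^ M * (1 + t * ‖z‖) ^ K) * ‖g z‖ := by
          rw [← hnorm]
          exact mul_le_mul_of_nonneg_right (hA x _) (norm_nonneg _)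
      _ ≤ A * ((t * ‖z‖) ^ M * (1 + ‖z‖) ^ K) * ‖g z‖ := by gcongr
      _ = A * t ^ M * (‖z‖ ^ M * (1 + ‖z‖) ^ K * ‖g z‖) := by ring
  calc (1 + ‖x‖) ^ K * ‖∫ z, f (x - t • z) * g z ∂μ‖
      = ‖∫ z, (1 + ‖x‖) ^ K • ((f (x - t • z) - taylorSum f M x (-t • z)) * g z) ∂μ‖ := by
        rw [integral_smul, norm_smul, ← hsubtract, Real.norm_of_nonneg (by positivity)]
    _ ≤ ∫ z, A * t ^ M * (‖z‖ ^ M * (1 + ‖z‖) ^ K * ‖g z‖) ∂μ :=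
        norm_integral_le_of_norm_le
          ((integrable_pow_mul_one_add_norm_pow_mul_norm g M K).const_mul _) (.of_forall hremainder)
    _ = A * (∫ z, ‖z‖ ^ M * (1 + ‖z‖) ^ K * ‖g z‖ ∂μ) * t ^ M := by
        rw [integral_const_mul]
        ring

end VanishingMoments

section Moments

variable {E F 𝕜 ι : Type*} [NormedAddCommGroup E] [NormedSpace ℝ E] [NormedAddCommGroup F]
  [NormedSpace ℝ F] [RCLike 𝕜]

theorem multilinear_diag_eq_sum_basis [Fintype ι]
    (b : Module.Basis ι ℝ E) {k : ℕ} (L : E [×k]→L[ℝ] F) (z : E) :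
    L (fun _ ↦ z) = ∑ r : Fin k → ι, (∏ i, b.repr z (r i)) • L (fun i ↦ b (r i)) := by
  classical
  conv_lhs => rw [← b.sum_repr z]
  rw [L.map_sum (fun _ i ↦ b.repr z i • b i)]
  exact Finset.sum_congr rfl fun r _ ↦ L.map_smul_univ _ _

variable [FiniteDimensional ℝ E] [MeasurableSpace E] [BorelSpace E] {μ : Measure E}
  [μ.HasTemperateGrowth]

theorem integrable_prod_repr_smul (b : Module.Basis ι ℝ E) (g : 𝓢(E, F)) {k : ℕ}
    (r : Fin k → ι) : Integrable (fun z ↦ (∏ i, b.repr z (r i)) • g z) μ := by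
  have h := integrable_multilinear_smul (μ := μ) g
    ((ContinuousMultilinearMap.mkPiAlgebra ℝ (Fin k) ℝ).compContinuousLinearMap
      fun i ↦ (b.coord (r i)).toContinuousLinearMap)
  simpa using h

theorem hasVanishingMoments_of_basis [Fintype ι] (b : Module.Basis ι ℝ E) {g : 𝓢(E, 𝕜)} {M : ℕ}
    (hg : ∀ α : ι → ℕ, ∑ i, α i < M → ∫ z, (∏ i, b.repr z i ^ α i) • g z ∂μ = 0) :
    HasVanishingMoments μ M g := by
  classical
  intro k hk L
  have hmonomial : ∀ r : Fin k → ι, ∫ z, (∏ i, b.repr z (r i)) • g z ∂μ = 0 := by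
    intro r
    have hdegree : ∑ j, (Finset.univ.filter (r · = j)).card = k :=
      (Finset.card_eq_sum_card_fiberwise fun i _ ↦ Finset.mem_univ (r i)).symm.trans
        (Finset.card_fin k)
    convert hg (fun j ↦ (Finset.univ.filter (r · = j)).card) (hdegree.trans_lt hk) using 4 with z
    simp [← Finset.prod_fiberwise' Finset.univ r (b.repr z ·)]
  have hexpand : ∀ z, L (fun _ ↦ z) * g z =
      ∑ r : Fin k → ι, L (fun i ↦ b (r i)) * ((∏ i, b.repr z (r i)) • g z) := by
    intro z
    simp only [multilinear_diag_eq_sum_basis b L z, Finset.sum_mul, smul_mul_assoc, mul_smul_comm]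
  simp only [hexpand]
  rw [integral_finsetSum _ fun r _ ↦ (integrable_prod_repr_smul b g r).const_mul _]
  exact Finset.sum_eq_zero fun r _ ↦ by rw [integral_const_mul, hmonomial, mul_zero]

theorem hasVanishingMoments_of_monomials [Fintype ι] {g : 𝓢(EuclideanSpace ℝ ι, 𝕜)} {M : ℕ}
    (hg : ∀ α : ι → ℕ, ∑ i, α i < M → ∫ x : EuclideanSpace ℝ ι, (∏ i, x i ^ α i) • g x = 0) :
    HasVanishingMoments volume M g :=
  hasVanishingMoments_of_basis (EuclideanSpace.basisFun ι ℝ).toBasis (by simpa using hg)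

end Moments

section Dilation

variable {E F 𝕜 : Type*} [NormedAddCommGroup E] [NormedSpace ℝ E]
  [NormedAddCommGroup F] [NormedSpace ℝ F] [RCLike 𝕜]

/-- The `L¹`-normalised dilation `x ↦ r ^ d • f (r • x)` with `d = dim E`; large `r` means fine
scale. -/
noncomputable def dilate (r : ℝ) (f : E → F) (x : E) : F :=
  r ^ finrank ℝ E • f (r • x)

@[simp]
theorem dilate_one (f : E → F) : dilate 1 f = f := by
  ext x
  simp [dilate]

variable [FiniteDimensional ℝ E] [MeasurableSpace E] [BorelSpace E] {μ : Measure E}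
  [μ.IsAddHaarMeasure]

theorem integral_dilate {r : ℝ} (hr : 0 < r) (f : E → F) :
    ∫ x, dilate r f x ∂μ = ∫ x, f x ∂μ := by
  simp only [dilate]
  rw [integral_smul, Measure.integral_comp_smul_of_nonneg μ f r (hR := hr.le),
    smul_inv_smul₀ (by positivity)]

theorem lintegral_dilate {r : ℝ} (hr : 0 < r) (f : E → ℝ) :
    ∫⁻ x, ENNReal.ofReal (dilate r f x) ∂μ = ∫⁻ x, ENNReal.ofReal (f x) ∂μ := by
  have hscale : ∫⁻ x, ENNReal.ofReal (f (r • x)) ∂μ =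
      ENNReal.ofReal |(r ^ finrank ℝ E)⁻¹| * ∫⁻ x, ENNReal.ofReal (f x) ∂μ :=
    calc ∫⁻ x, ENNReal.ofReal (f (r • x)) ∂μ
        = ∫⁻ x, ENNReal.ofReal (f x) ∂(μ.map (r • ·)) :=
          ((Homeomorph.smulOfNeZero r hr.ne').measurableEmbedding.lintegral_map
            fun x : E ↦ ENNReal.ofReal (f x)).symm
      _ = ENNReal.ofReal |(r ^ finrank ℝ E)⁻¹| * ∫⁻ x, ENNReal.ofReal (f x) ∂μ := by
          rw [Measure.map_addHaar_smul μ hr.ne', lintegral_smul_measure, smul_eq_mul]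
  have hpos : 0 < r ^ finrank ℝ E := by positivity
  simp only [dilate, smul_eq_mul, ENNReal.ofReal_mul hpos.le]
  rw [lintegral_const_mul' _ _ ENNReal.ofReal_ne_top, hscale, ← mul_assoc,
    ← ENNReal.ofReal_mul hpos.le, abs_of_pos (inv_pos.2 hpos), mul_inv_cancel₀ hpos.ne',
    ENNReal.ofReal_one, one_mul]

theorem convolution_dilate_apply {s : ℝ} (hs : 0 < s) (f g : E → 𝕜) (x : E) :
    (f ⋆[mul 𝕜 𝕜, μ] dilate s g) x = ∫ z, f (x - s⁻¹ • z) * g z ∂μ := by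
  rw [convolution_mul_swap, ← integral_dilate hs fun z ↦ f (x - s⁻¹ • z) * g z]
  simp [dilate, hs.ne']

theorem dilate_convolution_dilate {a : ℝ} (ha : 0 < a) (b : ℝ) (f g : E → 𝕜) :
    dilate a f ⋆[mul 𝕜 𝕜, μ] dilate b g = dilate a (f ⋆[mul 𝕜 𝕜, μ] dilate (b / a) g) := by
  ext x
  rw [dilate, convolution_mul_swap, convolution_mul_swap,
    ← integral_dilate ha fun u ↦ f (a • x - u) * dilate (b / a) g u, ← integral_smul]
  congr 1 with y
  have hpow : a ^ finrank ℝ E * (b / a) ^ finrank ℝ E = b ^ finrank ℝ E := by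
    rw [← mul_pow, mul_div_cancel₀ _ ha.ne']
  simp only [dilate, smul_sub, smul_mul_assoc, mul_smul_comm, smul_smul, hpow,
    div_mul_cancel₀ _ ha.ne', mul_comm (b ^ finrank ℝ E)]

end Dilation

section WeightedL1

theorem one_add_mul_rpow_le {c t N d : ℝ} {K : ℕ} (hc : 1 ≤ c) (ht : 0 ≤ t) (hN : 0 ≤ N)
    (hK : N + d ≤ K) : (1 + c * t) ^ N ≤ c ^ N * ((1 + t) ^ (-d) * (1 + t) ^ K) :=
  calc (1 + c * t) ^ N ≤ (c * (1 + t)) ^ N := by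
        gcongr
        linarith
    _ = c ^ N * (1 + t) ^ N := Real.mul_rpow (by positivity) (by positivity)
    _ ≤ c ^ N * ((1 + t) ^ (-d) * (1 + t) ^ K) := by
        rw [← Real.rpow_natCast, ← Real.rpow_add (by positivity)]
        gcongr
        · linarith
        · linarith

variable {E F 𝕜 : Type*} [NormedAddCommGroup E] [NormedSpace ℝ E]
  [NormedAddCommGroup F] [RCLike 𝕜] [MeasurableSpace E]

/-- The weighted `L¹` norm `∫ ‖f x‖ (1 + c‖x‖) ^ N dμ`, with values in `[0, ∞]` so that a bound on
it contains the convergence of the integral. -/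
noncomputable def weightedL1 (μ : Measure E) (c N : ℝ) (f : E → F) : ℝ≥0∞ :=
  ∫⁻ x, ENNReal.ofReal (‖f x‖ * (1 + c * ‖x‖) ^ N) ∂μ

variable [FiniteDimensional ℝ E] [BorelSpace E] {μ : Measure E} [μ.IsAddHaarMeasure]

theorem weightedL1_dilate [NormedSpace ℝ F] {a : ℝ} (ha : 0 < a) (c N : ℝ) (f : E → F) :
    weightedL1 μ c N (dilate a f) = weightedL1 μ (c / a) N f := by
  rw [weightedL1, weightedL1, ← lintegral_dilate ha fun x ↦ ‖f x‖ * (1 + c / a * ‖x‖) ^ N]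
  congr! 3 with x
  simp only [dilate, norm_smul, norm_pow, Real.norm_of_nonneg ha.le, smul_eq_mul]
  rw [← mul_assoc, ← mul_assoc, div_mul_cancel₀ _ ha.ne']

variable (μ) in
theorem exists_weightedL1_le_of_one_add_norm_pow_mul_norm_le {N : ℝ} (hN : 0 ≤ N) :
    ∃ (K : ℕ) (W : ℝ), 0 ≤ W ∧ ∀ (f : E → F) (B c : ℝ), 1 ≤ c →
      (∀ x, (1 + ‖x‖) ^ K * ‖f x‖ ≤ B) → weightedL1 μ c N f ≤ ENNReal.ofReal (W * B * c ^ N) := by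
  obtain ⟨K, hK⟩ := exists_nat_ge (N + (finrank ℝ E + 1))
  let w : E → ℝ := fun x ↦ (1 + ‖x‖) ^ (-((finrank ℝ E : ℝ) + 1))
  have hw0 : 0 ≤ w := fun x ↦ by positivity
  have hw_integrable : Integrable w μ := integrable_one_add_norm (by simp)
  refine ⟨K, ∫ x, w x ∂μ, integral_nonneg hw0, fun f B c hc hf ↦ ?_⟩
  have hB : 0 ≤ B := le_trans (by positivity) (hf 0)
  have hpointwise : ∀ x, ‖f x‖ * (1 + c * ‖x‖) ^ N ≤ B * c ^ N * w x := fun x ↦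
    calc ‖f x‖ * (1 + c * ‖x‖) ^ N ≤ ‖f x‖ * (c ^ N * (w x * (1 + ‖x‖) ^ K)) := by
          gcongr
          exact one_add_mul_rpow_le hc (norm_nonneg x) hN hK
      _ = (1 + ‖x‖) ^ K * ‖f x‖ * (c ^ N * w x) := by ring
      _ ≤ B * (c ^ N * w x) := mul_le_mul_of_nonneg_right (hf x)
          (mul_nonneg (by positivity) (hw0 x))
      _ = B * c ^ N * w x := by ring
  calc weightedL1 μ c N f ≤ ∫⁻ x, ENNReal.ofReal (B * c ^ N * w x) ∂μ :=
        lintegral_mono fun x ↦ ENNReal.ofReal_le_ofReal (hpointwise x)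
    _ = ENNReal.ofReal ((∫ x, w x ∂μ) * B * c ^ N) := by
        rw [← ofReal_integral_eq_lintegral_ofReal (hw_integrable.const_mul _)
          (.of_forall fun x ↦ mul_nonneg (by positivity) (hw0 x)), integral_const_mul]
        congr 1
        ring

theorem HasVanishingMoments.exists_weightedL1_convolution_le {g : 𝓢(E, 𝕜)} {M : ℕ}
    (hg : HasVanishingMoments μ M g) (f : 𝓢(E, 𝕜)) {N : ℝ} (hN : 0 ≤ N) :
    ∃ C : ℝ, 0 ≤ C ∧ ∀ a b c : ℝ, 0 < a → a ≤ b → a ≤ c →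
      weightedL1 μ c N (dilate a f ⋆[mul 𝕜 𝕜, μ] dilate b g) ≤
        ENNReal.ofReal (C * (a / b) ^ M * (c / a) ^ N) := by
  obtain ⟨K, W, hW0, hW⟩ :=
    exists_weightedL1_le_of_one_add_norm_pow_mul_norm_le μ (F := 𝕜) hN
  obtain ⟨C, hC0, hC⟩ := hg.exists_norm_integral_comp_sub_smul_mul_le f K
  refine ⟨W * C, by positivity, fun a b c ha hab hac ↦ ?_⟩
  have hb : 0 < b := ha.trans_le hab
  rw [dilate_convolution_dilate ha, weightedL1_dilate ha, mul_assoc W]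
  refine hW _ _ _ ((one_le_div ha).2 hac) fun x ↦ ?_
  rw [convolution_dilate_apply (div_pos hb ha), inv_div]
  exact hC (a / b) ⟨by positivity, (div_le_one hb).2 hab⟩ x

end WeightedL1

section DyadicFamily

variable {E F 𝕜 : Type*} [NormedAddCommGroup E] [NormedSpace ℝ E]
  [NormedAddCommGroup F] [NormedSpace ℝ F] [RCLike 𝕜]

/-- The inhomogeneous Littlewood–Paley family with low-frequency part `f₀` and high-frequency
profile `f₁`: its `j`-th member is `f₀` for `j = 0` and lives at scale `2 ^ (j - 1)` for `1 ≤ j`. -/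
noncomputable def dyadicFamily (f₀ f₁ : E → F) : ℕ → E → F
  | 0 => f₀
  | j + 1 => dilate (2 ^ j) f₁

theorem eq_dyadicFamily {f₀ f₁ : E → F} {u : ℕ → E → F} (h₀ : u 0 = f₀)
    (h₁ : ∀ j, 1 ≤ j → ∀ x,
      u j x = (2 : ℝ) ^ ((j - 1) * finrank ℝ E) • f₁ ((2 : ℝ) ^ (j - 1) • x)) :
    u = dyadicFamily f₀ f₁ := by
  funext j x
  rcases j with _ | j
  · rw [h₀, dyadicFamily]
  · simp [h₁, dyadicFamily, dilate, pow_mul]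

variable [FiniteDimensional ℝ E] [MeasurableSpace E] [BorelSpace E] {μ : Measure E}
  [μ.IsAddHaarMeasure]

theorem HasVanishingMoments.exists_weightedL1_dyadicFamily_convolution_le_div_pow
    {g₁ : 𝓢(E, 𝕜)} {M : ℕ} (hg₁ : HasVanishingMoments μ M g₁) (f₀ f₁ g₀ : 𝓢(E, 𝕜)) {N : ℝ}
    (hN : 0 ≤ N) :
    ∃ C : ℝ, 0 ≤ C ∧ ∀ (j k : ℕ) (c : ℝ), j ≤ k → 2 ^ (j - 1) ≤ c →
      weightedL1 μ c N (dyadicFamily f₀ f₁ j ⋆[mul 𝕜 𝕜, μ] dyadicFamily g₀ g₁ k) ≤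
        ENNReal.ofReal (C * (2 ^ (j - 1) / 2 ^ (k - 1)) ^ M * (c / 2 ^ (j - 1)) ^ N) := by
  -- For `j = k = 0` there is no cancellation, but also no gap between the scales.
  obtain ⟨C₀₀, h₀₀, hC₀₀⟩ :=
    (HasVanishingMoments.zero_order (μ := μ) g₀).exists_weightedL1_convolution_le f₀ hN
  obtain ⟨C₀₁, h₀₁, hC₀₁⟩ := hg₁.exists_weightedL1_convolution_le f₀ hN
  obtain ⟨C₁₁, h₁₁, hC₁₁⟩ := hg₁.exists_weightedL1_convolution_le f₁ hN
  refine ⟨C₀₀ + C₀₁ + C₁₁, by positivity, fun j k c hjk hc ↦ ?_⟩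
  have hc0 : 0 ≤ c := le_trans (by positivity) hc
  suffices ∃ C ≤ C₀₀ + C₀₁ + C₁₁,
      weightedL1 μ c N (dyadicFamily f₀ f₁ j ⋆[mul 𝕜 𝕜, μ] dyadicFamily g₀ g₁ k) ≤
        ENNReal.ofReal (C * (2 ^ (j - 1) / 2 ^ (k - 1)) ^ M * (c / 2 ^ (j - 1)) ^ N) by
    obtain ⟨C, hC, h⟩ := this
    exact h.trans (ENNReal.ofReal_le_ofReal (by gcongr))
  rcases j with _ | j <;> rcases k with _ | k
  · exact ⟨C₀₀, by linarith, by
      simpa [dyadicFamily] using hC₀₀ 1 1 c one_pos le_rfl (by simpa using hc)⟩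
  · exact ⟨C₀₁, by linarith, by
      simpa [dyadicFamily] using
        hC₀₁ 1 (2 ^ k) c one_pos (one_le_pow₀ one_le_two) (by simpa using hc)⟩
  · omega
  · exact ⟨C₁₁, by linarith,
      hC₁₁ (2 ^ j) (2 ^ k) c (by positivity) (pow_le_pow_right₀ one_le_two (by omega)) hc⟩

-- The factor `2 ^ (N + M)` pays for the truncated subtractions `0 - 1 = 0`.
theorem two_pow_div_pow_mul_rpow_le {j k : ℕ} (hjk : j ≤ k) (r M : ℕ) {N : ℝ} (hN : 0 ≤ N) :
    ((2 : ℝ) ^ (j - 1) / 2 ^ (k - 1)) ^ M * (2 ^ r / 2 ^ (j - 1)) ^ N ≤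
      2 ^ (N + M) * 2 ^ (N * ((r : ℝ) - j) - M * ((k : ℝ) - j)) := by
  have hdiv : ∀ a b : ℕ, (2 : ℝ) ^ a / 2 ^ b = 2 ^ ((a : ℝ) - b) := fun a b ↦ by
    rw [Real.rpow_sub two_pos, Real.rpow_natCast, Real.rpow_natCast]
  have hj : (j : ℝ) - 1 ≤ (j - 1 : ℕ) := by
    rw [sub_le_iff_le_add]
    exact_mod_cast (by omega : j ≤ j - 1 + 1)
  have hkj : (k : ℝ) - j - 1 ≤ (k - 1 : ℕ) - (j - 1 : ℕ) := by
    rw [sub_sub, sub_le_sub_iff]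
    exact_mod_cast (by omega : k + (j - 1) ≤ k - 1 + (j + 1))
  rw [hdiv, hdiv, ← Real.rpow_natCast, ← Real.rpow_mul zero_le_two, ← Real.rpow_mul zero_le_two,
    ← Real.rpow_add two_pos, ← Real.rpow_add two_pos]
  refine Real.rpow_le_rpow_of_exponent_le one_le_two ?_
  nlinarith [mul_le_mul_of_nonneg_left hj hN, mul_le_mul_of_nonneg_left hkj M.cast_nonneg]

theorem HasVanishingMoments.exists_weightedL1_dyadicFamily_convolution_le_two_rpow
    {g₁ : 𝓢(E, 𝕜)} {M : ℕ} (hg₁ : HasVanishingMoments μ M g₁) (f₀ f₁ g₀ : 𝓢(E, 𝕜)) {N : ℝ}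
    (hN : 0 ≤ N) :
    ∃ C : ℝ, 0 ≤ C ∧ ∀ j k r : ℕ, j ≤ k → j ≤ r →
      weightedL1 μ (2 ^ r) N (dyadicFamily f₀ f₁ j ⋆[mul 𝕜 𝕜, μ] dyadicFamily g₀ g₁ k) ≤
        ENNReal.ofReal (C * 2 ^ (N * ((r : ℝ) - j) - M * ((k : ℝ) - j))) := by
  obtain ⟨C, hC0, hC⟩ := hg₁.exists_weightedL1_dyadicFamily_convolution_le_div_pow f₀ f₁ g₀ hN
  refine ⟨C * 2 ^ (N + M), by positivity, fun j k r hjk hjr ↦ ?_⟩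
  refine (hC j k (2 ^ r) hjk (pow_le_pow_right₀ one_le_two (by omega))).trans ?_
  rw [mul_assoc C, mul_assoc C]
  exact ENNReal.ofReal_le_ofReal
    (mul_le_mul_of_nonneg_left (two_pow_div_pow_mul_rpow_le hjk r M hN) hC0)

theorem stmt13_general (η₀ η₁ θ₀ θ₁ : 𝓢(E, 𝕜)) {N : ℝ} (hN : 0 ≤ N)
    (hη₁ : HasVanishingMoments μ ⌈N⌉₊ η₁) (hθ₁ : HasVanishingMoments μ ⌈2 * N⌉₊ θ₁) :
    ∃ C : ℝ, 0 < C ∧ ∀ j k : ℕ,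
      weightedL1 μ (2 ^ k) N (dyadicFamily η₀ η₁ j ⋆[mul 𝕜 𝕜, μ] dyadicFamily θ₀ θ₁ k) ≤
        ENNReal.ofReal (C * 2 ^ (-N * |(j : ℝ) - k|)) := by
  obtain ⟨A, hA0, hA⟩ := hθ₁.exists_weightedL1_dyadicFamily_convolution_le_two_rpow η₀ η₁ θ₀ hN
  obtain ⟨B, hB0, hB⟩ := hη₁.exists_weightedL1_dyadicFamily_convolution_le_two_rpow θ₀ θ₁ η₀ hN
  refine ⟨A + B + 1, by positivity, fun j k ↦ ?_⟩
  rcases le_total j k with hjk | hkj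
  · have hsub : (0 : ℝ) ≤ k - j := sub_nonneg.2 (by exact_mod_cast hjk)
    refine (hA j k k hjk hjk).trans (ENNReal.ofReal_le_ofReal ?_)
    rw [abs_sub_comm, abs_of_nonneg hsub]
    gcongr
    · linarith
    · exact one_le_two
    · nlinarith [mul_le_mul_of_nonneg_right (Nat.le_ceil (2 * N)) hsub]
  · have hsub : (0 : ℝ) ≤ j - k := sub_nonneg.2 (by exact_mod_cast hkj)
    rw [← convolution_flip, ContinuousLinearMap.flip_mul]
    refine (hB k j k hkj le_rfl).trans (ENNReal.ofReal_le_ofReal ?_)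
    rw [abs_of_nonneg hsub]
    gcongr
    · linarith
    · exact one_le_two
    · nlinarith [mul_le_mul_of_nonneg_right (Nat.le_ceil N) hsub]

end DyadicFamily

/-- **Almost-orthogonality estimate (Bui's Lemma 2.1).** If `η_j = 2^{(j−1)n} η₁(2^{j−1}·)`
and `θ_k = 2^{(k−1)n} θ₁(2^{k−1}·)` for `j, k ≥ 1`, where the Schwartz functions `η₁, θ₁`
have all moments vanishing, then for every `N > 0` there is `C = C(η,θ,N) > 0` with
`∫ |η_j ∗ θ_k(x)| (1 + 2^k|x|)^N dx ≤ C 2^{−N|j−k|}` for all `j, k ≥ 0`. -/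
theorem stmt13 (n : ℕ) (η₀ η₁ θ₀ θ₁ : SchwartzMap (EuclideanSpace ℝ (Fin n)) ℝ)
    (hη₁ : ∀ α : Fin n → ℕ, ∫ x : EuclideanSpace ℝ (Fin n), (∏ i, x i ^ α i) * η₁ x = 0)
    (hθ₁ : ∀ α : Fin n → ℕ, ∫ x : EuclideanSpace ℝ (Fin n), (∏ i, x i ^ α i) * θ₁ x = 0)
    (η θ : ℕ → EuclideanSpace ℝ (Fin n) → ℝ)
    (hη0 : η 0 = η₀) (hθ0 : θ 0 = θ₀)
    (hη : ∀ j : ℕ, 1 ≤ j → ∀ x, η j x = 2 ^ ((j - 1) * n) * η₁ ((2 : ℝ) ^ (j - 1) • x))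
    (hθ : ∀ k : ℕ, 1 ≤ k → ∀ x, θ k x = 2 ^ ((k - 1) * n) * θ₁ ((2 : ℝ) ^ (k - 1) • x))
    (N : ℝ) (hN : 0 < N) :
    ∃ C : ℝ, 0 < C ∧ ∀ j k : ℕ,
      (∫⁻ x, ENNReal.ofReal
          (|∫ y, η j (x - y) * θ k y| * (1 + (2 : ℝ) ^ (k : ℝ) * ‖x‖) ^ N))
        ≤ ENNReal.ofReal (C * (2 : ℝ) ^ (-N * |(j : ℝ) - (k : ℝ)|)) := by
  simpa only [weightedL1, convolution_mul_swap, Real.norm_eq_abs, Real.rpow_natCast,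
    ← eq_dyadicFamily hη0 (by simpa using hη), ← eq_dyadicFamily hθ0 (by simpa using hθ)] using
    stmt13_general η₀ η₁ θ₀ θ₁ hN.le (hasVanishingMoments_of_monomials fun α _ ↦ hη₁ α)
      (hasVanishingMoments_of_monomials fun α _ ↦ hθ₁ α)
end
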